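/- Let F be a finite field with q elements. For each n ≥ 1 let e_n denote the number of matrices X ∈ M_n(F) such that both X and X − I_n are invertible, and set e_0 = 0... Prove that for all n ≥ 1, e_n = e_{n−1} · (q^n − 1) · q^(n−1) + (−1)^n · q^(n(n−1)/2). -/

import Mathlib

def cc (q : ℤ) : ℕ → ℕ → ℤ
  | _, 0 => 1
  | 0, _+1 => 0
  | k+1, i+1 => cc q k (i+1) - q^k * cc q k i

def gam (q : ℤ) (m : ℕ) : ℤ := ∏ i : Fin m, (q^m - q^(i:ℕ))
def gg (q : ℤ) (n j : ℕ) : ℤ := q^(j*(n-j)) * gam q (n-j)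

lemma cc_zero (q k) : cc q k 0 = 1 := by cases k <;> rfl
lemma cc_succ (q k i) : cc q (k+1) (i+1) = cc q k (i+1) - q^k * cc q k i := rfl
lemma cc_gt (q) (k i : ℕ) (h : k < i) : cc q k i = 0 := by
  induction k generalizing i with
  | zero => obtain ⟨i, rfl⟩ := Nat.exists_eq_succ_of_ne_zero h.ne'; rfl
  | succ k ih =>
    obtain ⟨i, rfl⟩ := Nat.exists_eq_succ_of_ne_zero (by omega : i ≠ 0)
    rw [Nat.succ_eq_add_one, cc_succ, ih _ (by omega), ih _ (by omega)]; ring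
lemma cc_self (q) (k : ℕ) : cc q k k = (-1)^k * q^(k*(k-1)/2) := by
  induction k with
  | zero => simp [cc]
  | succ k ih =>
    rw [cc_succ, cc_gt q k (k+1) (by omega), ih]
    have : (k+1)*(k+1-1)/2 = k + k*(k-1)/2 := by
      rw [← Finset.sum_range_id_mul_two, ← Finset.sum_range_id_mul_two, Nat.mul_div_cancel _ (by norm_num), Nat.mul_div_cancel _ (by norm_num), Finset.sum_range_succ, add_comm]
    rw [this]; ring

lemma cc_B_of_A (q) (k : ℕ) (h : ∀ i, cc q k (i+1) * (q^(i+1)-1) = cc q k i * (q^i - q^k)) (i) :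
   cc q (k+1) i * (q^(k+1)-q^i) = cc q k i * (q^(k+1)-1)*q^i := by
  cases i with
  | zero => simp [cc_zero]
  | succ i => rw [cc_succ]; linear_combination (-q^(k+1)) * h i
lemma cc_A (q) (k : ℕ) : ∀ i, cc q k (i+1) * (q^(i+1)-1) = cc q k i * (q^i - q^k) := by
  induction k with
  | zero => intro i; cases i <;> simp [cc]
  | succ k ih =>
    intro i
    have := cc_B_of_A q k ih i
    rw [cc_succ]; linear_combination ih i + this
lemma gam_succ (q m) : gam q (m+1) = (q^(m+1)-1)*q^m*gam q m := by
  unfold gam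
  rw [Fin.prod_univ_succ]
  have : ∀ i : Fin m, q^(m+1) - q^((i.succ : Fin (m+1)):ℕ) = q * (q^m - q^(i:ℕ)) := by
    intro i; rw [Fin.val_succ]; ring
  simp_rw [this, Finset.prod_mul_distrib]
  simp; ring

lemma gg_succ (q) (n j : ℕ) (h : j ≤ n) : gg q (n+1) j * q^j= (q^(n+1)-q^j)*q^n * gg q n j := by
  obtain ⟨m, rfl⟩ := Nat.exists_eq_add_of_le h
  unfold gg
  have h1 : j + m + 1 - j = m+1 := by omega
  have h2 : j + m - j = m := by omega
  rw [h1, h2, gam_succ]; ring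

def EE (q : ℤ) (n j k : ℕ) : ℤ := ∑ i ∈ Finset.range (k+1), cc q k i * gg q n (j+i)

lemma EE_succ (q n j k) : EE q n j (k+1) = EE q n j k - q^k * EE q n (j+1) k := by
  unfold EE
  rw [Finset.sum_range_succ' (fun i => cc q (k+1) i * gg q n (j + i)) (k+1), Finset.sum_range_succ' (fun i => cc q k i * gg q n (j + i)) k, cc_zero, cc_zero, Finset.mul_sum]
  simp_rw [cc_succ, sub_mul, Finset.sum_sub_distrib]
  rw [Finset.sum_range_succ, cc_gt q k (k+1) (by omega)]
  simp_rw [show ∀ i, j + 1 + i = j + (i+1) by intro i; omega]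
  simp_rw [mul_assoc]; ring

lemma EE_final (q : ℤ) (hq : q ≠ 0) (n : ℕ) : EE q (n+1) 0 (n+1) =
   EE q n 0 n * (q^(n+1)-1)*q^n + (-1)^(n+1) * q^((n+1)*n/2) := by
  unfold EE
  rw [Finset.sum_range_succ, cc_self]
  have : gg q (n+1) (0+(n+1)) = 1 := by unfold gg; rw [zero_add, Nat.sub_self]; simp [gam]
  rw [this, Finset.sum_mul, Finset.sum_mul, mul_one]
  congr 1
  refine Finset.sum_congr rfl fun i hi => ?_
  rw [Finset.mem_range] at hi
  have h1 := gg_succ q n i (by omega)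
  have h2 := cc_B_of_A q n (cc_A q n) i
  rw [zero_add]
  have : q^i ≠ 0 := pow_ne_zero _ hq
  apply mul_right_cancel₀ this
  linear_combination (cc q (n+1) i) * h1 + q^n*gg q n i * h2

section
variable {F V : Type*} [Field F] [Fintype F] [AddCommGroup V] [Module F V] [Module.Finite F V]

def AA (U W : Submodule F V) : Set (Module.End F V) :=
  {g | IsUnit g ∧ (∀ u ∈ U, g u = u) ∧ ∀ w ∈ W, g w = w → w = 0}

lemma ncard_isUnit (m : ℕ) : (({D : Matrix (Fin m) (Fin m) F | IsUnit D}.ncard : ℕ) : ℤ)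
    = gam (Fintype.card F) m := by
  have h : {D : Matrix (Fin m) (Fin m) F | IsUnit D}.ncard = Nat.card (GL (Fin m) F) := by
    have : {D : Matrix (Fin m) (Fin m) F | IsUnit D} = Set.range (fun g : GL (Fin m) F => (g : Matrix (Fin m) (Fin m) F)) := by
      ext D; rfl
    rw [this, ← Set.image_univ, Set.ncard_image_of_injective _ Units.val_injective, Set.ncard_univ]
  rw [h, Matrix.card_GL_field, gam]
  push_cast
  refine Finset.prod_congr rfl fun i _ => ?_
  rw [Nat.cast_sub (Nat.pow_le_pow_right Fintype.card_pos i.2.le)]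
  push_cast; rfl

lemma ncard_base (U : Submodule F V) :
    ((AA U ⊥).ncard : ℤ) = gg (Fintype.card F) (Module.finrank F V) (Module.finrank F U) := by
  classical
  obtain ⟨C, hC⟩ := U.exists_isCompl
  have hdim := Submodule.finrank_add_eq_of_isCompl hC
  set j := Module.finrank F U with hj
  set m := Module.finrank F C with hm
  have hm' : Module.finrank F V - j = m := by omega
  let bU := Module.finBasis F U
  let bC := Module.finBasis F C
  let b : Module.Basis (Fin j ⊕ Fin m) F V := (bU.prod bC).map (Submodule.prodEquivOfIsCompl U C hC)
  have hbl : ∀ i, b (Sum.inl i) = (bU i : V) := by intro i; simp [b]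
  have hU : ∀ g : Module.End F V, (∀ u ∈ U, g u = u) ↔ ∀ i, g (b (Sum.inl i)) = b (Sum.inl i) := by
    intro g
    constructor
    · intro h i; rw [hbl]; exact h _ (bU i).2
    · intro h u hu
      have : g ∘ₗ U.subtype = U.subtype := bU.ext fun i => by
        have := h i
        rw [hbl] at this
        simpa using this
      exact LinearMap.congr_fun this ⟨u, hu⟩
  let T := LinearMap.toMatrixAlgEquiv b
  have key : T '' (AA U ⊥) = (fun p : Matrix (Fin j) (Fin m) F × Matrix (Fin m) (Fin m) F =>
      Matrix.fromBlocks 1 p.1 0 p.2) '' (Set.univ ×ˢ {D | IsUnit D}) := by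
    ext M
    constructor
    · rintro ⟨g, ⟨hg, hgU, -⟩, rfl⟩
      rw [hU] at hgU
      have hT : T g = Matrix.fromBlocks 1 (T g).toBlocks₁₂ 0 (T g).toBlocks₂₂ := by
        conv_lhs => rw [← Matrix.fromBlocks_toBlocks (T g)]
        congr 1
        · ext i i'
          simp [Matrix.toBlocks₁₁, T, LinearMap.toMatrixAlgEquiv_apply, hgU, Matrix.one_apply, Finsupp.single_apply, eq_comm]
        · ext i i'
          simp [Matrix.toBlocks₂₁, T, LinearMap.toMatrixAlgEquiv_apply, hgU]
      refine ⟨((T g).toBlocks₁₂, (T g).toBlocks₂₂), ⟨trivial, ?_⟩, hT.symm⟩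
      have h1 : IsUnit (T g) := hg.map T
      rw [hT, Matrix.isUnit_fromBlocks_zero₂₁] at h1
      exact h1.2
    · rintro ⟨⟨B, D⟩, ⟨-, hD⟩, rfl⟩
      refine ⟨T.symm (Matrix.fromBlocks 1 B 0 D), ⟨?_, ?_, ?_⟩, by simp⟩
      · exact (Matrix.isUnit_fromBlocks_zero₂₁.2 ⟨isUnit_one, hD⟩).map T.symm
      · rw [hU]
        intro i
        simp [T, LinearMap.toMatrixAlgEquiv_symm, Matrix.toLinAlgEquiv_self, Matrix.one_apply]
      · intro w hw _; simpa using hw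
  have h1 : (AA U ⊥).ncard = (T '' (AA U ⊥)).ncard := (Set.ncard_image_of_injective _ T.injective).symm
  rw [h1, key, Set.ncard_image_of_injective, Set.ncard_prod, Nat.cast_mul, ncard_isUnit, gg, hm']
  · simp [Set.ncard_univ, Matrix, ← pow_mul, mul_comm]
  · rintro ⟨B, D⟩ ⟨B', D'⟩ h
    obtain ⟨-, h1, -, h2⟩ := Matrix.fromBlocks_inj.1 h
    simp_all

lemma exists_split (W : Submodule F V) (k : ℕ) (hW : Module.finrank F W = k + 1) :
    ∃ (W' : Submodule F V) (v : V), v ∉ W' ∧ W = F ∙ v ⊔ W' ∧ Module.finrank F W' = k := by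
  have : W ≠ ⊥ := by rintro rfl; simp at hW
  obtain ⟨v, hv, hv0⟩ := W.ne_bot_iff.1 this
  obtain ⟨C, hC⟩ := (F ∙ v).exists_isCompl
  have hW2 : W = F ∙ v ⊔ C ⊓ W := by
    rw [← sup_inf_assoc_of_le C (by simpa using hv), hC.sup_eq_top, top_inf_eq]
  have hd : F ∙ v ⊓ (C ⊓ W) = ⊥ := by
    rw [← inf_assoc, hC.inf_eq_bot, bot_inf_eq]
  refine ⟨C ⊓ W, v, ?_, hW2, ?_⟩
  · intro h
    apply hv0
    have : v ∈ F ∙ v ⊓ (C ⊓ W) := ⟨Submodule.mem_span_singleton_self v, h⟩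
    rw [hd] at this; simpa using this
  · have := Submodule.finrank_sup_add_finrank_inf_eq (F ∙ v) (C ⊓ W)
    rw [← hW2, hd, finrank_bot, finrank_span_singleton hv0] at this
    omega

lemma mem_line_sup {W : Submodule F V} {v x : V} (h : x ∈ F ∙ v ⊔ W) :
    ∃ a : F, ∃ w ∈ W, x = a • v + w := by
  obtain ⟨y, hy, z, hz, rfl⟩ := Submodule.mem_sup.1 h
  obtain ⟨a, rfl⟩ := Submodule.mem_span_singleton.1 hy
  exact ⟨a, z, hz, rfl⟩

lemma ncard_main (k : ℕ) : ∀ (U W : Submodule F V), Disjoint U W → Module.finrank F W = k →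
    ((AA U W).ncard : ℤ) = EE (Fintype.card F) (Module.finrank F V) (Module.finrank F U) k := by
  classical
  induction k with
  | zero =>
    intro U W _ hW
    rw [Submodule.finrank_eq_zero] at hW
    subst hW
    rw [ncard_base]; simp [EE, cc_zero]
  | succ k ih =>
    intro U W hUW hW
    obtain ⟨W', v, hv, rfl, hW'⟩ := exists_split W k hW
    rw [EE_succ]
    have hUW' : Disjoint U W' := hUW.mono_right le_sup_right
    rw [← ih U W' hUW' hW']
    haveI : Finite (Module.End F V) := Module.finite_of_finite F
    haveI : Finite V := Module.finite_of_finite F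
    haveI : Fintype W' := Fintype.ofFinite _
    haveI : Fintype (Module.End F V) := Fintype.ofFinite _
    have hmem : ∀ w : W', v + w ∈ F ∙ v ⊔ W' := fun w =>
      add_mem (Submodule.mem_sup_left (Submodule.mem_span_singleton_self v)) (Submodule.mem_sup_right w.2)
    have hvw : ∀ w : W', v + w ∉ W' := fun w h => hv (by simpa using sub_mem h w.2)
    have hvw0 : ∀ w : W', v + w ≠ 0 := fun w h => hvw w (h ▸ zero_mem _)
    have hvU : ∀ w : W', v + w ∉ U := fun w h =>
      hvw0 w (Submodule.disjoint_def.1 hUW _ h (hmem w))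
    have hcard : ∀ w : W', (((AA (F ∙ (v + (w : V)) ⊔ U) W').ncard : ℕ) : ℤ) =
        EE (Fintype.card F) (Module.finrank F V) (Module.finrank F U + 1) k := by
      intro w
      rw [ih _ W' _ hW']
      · congr 1
        have := Submodule.finrank_sup_add_finrank_inf_eq (F ∙ (v + (w : V))) U
        have hd : F ∙ (v + (w : V)) ⊓ U = ⊥ := by
          rw [eq_bot_iff]
          rintro x ⟨hx, hxU⟩
          obtain ⟨a, rfl⟩ := Submodule.mem_span_singleton.1 hx
          by_cases ha : a = 0
          · simp [ha]
          · exact absurd ((Submodule.smul_mem_iff _ ha).1 hxU) (hvU w)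
        rw [hd, finrank_bot, finrank_span_singleton (hvw0 w)] at this
        omega
      · rw [Submodule.disjoint_def]
        intro x hx hxW
        obtain ⟨a, u, hu, rfl⟩ := mem_line_sup hx
        have h1 : u ∈ F ∙ v ⊔ W' := by
          have := sub_mem (Submodule.mem_sup_right hxW : _ ∈ F ∙ v ⊔ W') (Submodule.smul_mem _ a (hmem w))
          simpa using this
        have hu0 := Submodule.disjoint_def.1 hUW _ hu h1
        subst hu0
        rw [add_zero] at hxW ⊢
        by_cases ha : a = 0
        · simp [ha]
        · exact absurd ((Submodule.smul_mem_iff _ ha).1 hxW) (hvw w)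
    have hset : AA U W' = AA U (F ∙ v ⊔ W') ∪ ⋃ w : W', AA (F ∙ (v + (w : V)) ⊔ U) W' := by
      ext g
      simp only [Set.mem_union, Set.mem_iUnion]
      constructor
      · rintro ⟨hg, hU, hgW⟩
        by_cases h : ∀ x ∈ F ∙ v ⊔ W', g x = x → x = 0
        · exact Or.inl ⟨hg, hU, h⟩
        · right
          push Not at h
          obtain ⟨x, hx, hgx, hx0⟩ := h
          obtain ⟨a, w, hw, rfl⟩ := mem_line_sup hx
          have ha : a ≠ 0 := by
            rintro rfl
            simp only [zero_smul, zero_add] at hgx hx0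
            exact hx0 (hgW w hw hgx)
          refine ⟨⟨a⁻¹ • w, Submodule.smul_mem _ _ hw⟩, hg, ?_, hgW⟩
          intro y hy
          obtain ⟨c, u, hu, rfl⟩ := mem_line_sup hy
          have h2 : v + a⁻¹ • w = a⁻¹ • (a • v + w) := by
            rw [smul_add, smul_smul, inv_mul_cancel₀ ha, one_smul]
          simp only [h2, map_add g (c • _), map_smul g, hgx, hU u hu]
      · rintro (⟨hg, hU, hgW⟩ | ⟨w, hg, hU, hgW⟩)
        · exact ⟨hg, hU, fun x hx => hgW x (Submodule.mem_sup_right hx)⟩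
        · exact ⟨hg, fun x hx => hU x (Submodule.mem_sup_right hx), hgW⟩
    have hfix : ∀ (w : W') (g), g ∈ AA (F ∙ (v + (w : V)) ⊔ U) W' → g (v + w) = v + w := by
      rintro w g ⟨_, h, _⟩
      exact h _ (Submodule.mem_sup_left (Submodule.mem_span_singleton_self _))
    have hdisj : Disjoint (AA U (F ∙ v ⊔ W')) (⋃ w : W', AA (F ∙ (v + (w : V)) ⊔ U) W') := by
      rw [Set.disjoint_left]
      rintro g ⟨_, _, h⟩ hg
      obtain ⟨w, hw⟩ := Set.mem_iUnion.1 hg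
      exact hvw0 w (h _ (hmem w) (hfix w g hw))
    have hpw : Pairwise (Function.onFun Disjoint fun w : W' => AA (F ∙ (v + (w : V)) ⊔ U) W') := by
      intro w w' hne
      rw [Function.onFun, Set.disjoint_left]
      intro g h1 h2
      apply hne
      have e1 := hfix w g h1
      have e2 := hfix w' g h2
      have := h1.2.2 _ (sub_mem w.2 w'.2) (by
        have : (w : V) - w' = (v + w) - (v + w') := by abel
        rw [this, map_sub, e1, e2])
      exact Subtype.ext (sub_eq_zero.1 this)
    have hun : (((⋃ w : W', AA (F ∙ (v + (w : V)) ⊔ U) W').ncard : ℕ) : ℤ) =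
        (Fintype.card F : ℤ)^k * EE (Fintype.card F) (Module.finrank F V) (Module.finrank F U + 1) k := by
      rw [Set.ncard_iUnion_of_finite (fun _ => Set.toFinite _) hpw, finsum_eq_sum_of_fintype]
      push_cast
      simp_rw [hcard]
      rw [Finset.sum_const, Finset.card_univ, Module.card_eq_pow_finrank (K := F), hW']
      simp
    rw [hset, Set.ncard_union_eq hdisj (Set.toFinite _) (Set.toFinite _)]
    push_cast
    rw [hun]; ring

lemma ncard_matrix (n : ℕ) :
    ({X : Matrix (Fin n) (Fin n) F | IsUnit X ∧ IsUnit (X - 1)}.ncard : ℤ)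
      = EE (Fintype.card F) n 0 n := by
  have h := ncard_main (F := F) (V := Fin n → F) n ⊥ ⊤ disjoint_bot_left (by simp)
  rw [finrank_bot, Module.finrank_fin_fun] at h
  rw [← h]
  let T := Matrix.toLinAlgEquiv' (R := F) (n := Fin n)
  rw [← Set.ncard_image_of_injective _ T.injective]
  congr 2
  have hT : ∀ X, IsUnit (T X) ↔ IsUnit X := fun X => MulEquiv.isUnit_map T
  have h1 : ∀ g : Module.End F (Fin n → F), IsUnit (g - 1) ↔ ∀ w, g w = w → w = 0 := by
    intro g
    rw [LinearMap.isUnit_iff_ker_eq_bot, LinearMap.ker_eq_bot']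
    simp [sub_eq_zero]
  ext g
  constructor
  · rintro ⟨X, ⟨hX, hX1⟩, rfl⟩
    refine ⟨(hT X).2 hX, by simp, fun w _ => (h1 _).1 ?_ w⟩
    rw [← hT, map_sub, map_one] at hX1
    exact hX1
  · rintro ⟨hg, -, hw⟩
    refine ⟨T.symm g, ⟨?_, ?_⟩, by simp⟩
    · rw [← hT]; simpa using hg
    · rw [← hT, map_sub, map_one, T.apply_symm_apply]
      exact (h1 g).2 fun w => hw w trivial
end


/-- Let `F` be a finite field with `q` elements and `eₙ` the number of linear
derangements in `M_n(F)`, i.e. of matrices `X` with both `X` and `X - Iₙ` invertible.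
Then `e₁ = q - 2` and, for `n ≥ 2`,
`eₙ = e_{n-1} · (qⁿ - 1) · q^(n-1) + (-1)ⁿ · q^(n(n-1)/2)`. -/
theorem linearDerangements_recurrence (F : Type*) [Field F] [Fintype F] :
    (({X : Matrix (Fin 1) (Fin 1) F | IsUnit X ∧ IsUnit (X - 1)}.ncard : ℤ)
        = (Fintype.card F : ℤ) - 2) ∧
    ∀ n : ℕ, 2 ≤ n →
      (({X : Matrix (Fin n) (Fin n) F | IsUnit X ∧ IsUnit (X - 1)}.ncard : ℤ)
        = ({X : Matrix (Fin (n - 1)) (Fin (n - 1)) F |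
              IsUnit X ∧ IsUnit (X - 1)}.ncard : ℤ)
            * ((Fintype.card F : ℤ) ^ n - 1) * (Fintype.card F : ℤ) ^ (n - 1)
          + (-1) ^ n * (Fintype.card F : ℤ) ^ (n * (n - 1) / 2)) := by
  have hq : (Fintype.card F : ℤ) ≠ 0 := by exact_mod_cast Fintype.card_ne_zero
  refine ⟨?_, ?_⟩
  · rw [ncard_matrix, show (1:ℕ) = 0 + 1 from rfl, EE_final _ hq]
    simp [EE, cc_zero, gg, gam]
    ring
  · intro n hn
    obtain ⟨m, rfl⟩ := Nat.exists_eq_add_of_le' (show 1 ≤ n by omega)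
    rw [Nat.add_sub_cancel, ncard_matrix, ncard_matrix, EE_final _ hq]
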